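/- Geometric-weight comparison of momentum and gradient sums. If 0 < β₁ < β₂^{1/4}, 0 < β₂ < 1, and a₀ > 0, then for every T ≥ 1: Σ_{t=1}^T b_t²/√(a_t) ≤ ( (1−β₁)² / (1 − β₁/β₂^{1/4})² ) · Σ_{t=1}^T c_t²/√(a_t). -/

import Mathlib

/-- Geometric-weight comparison of momentum and gradient sums. If `0 < β₁ < β₂^{1/4}`,
`0 < β₂ < 1`, and `a₀ > 0`, then for every `T ≥ 1`,
`Σ_{t=1}^T b_t²/√a_t ≤ ((1−β₁)²/(1 − β₁/β₂^{1/4})²) · Σ_{t=1}^T c_t²/√a_t`. -/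
theorem geometric_weight_momentum_gradient_comparison
    (β₁ β₂ : ℝ) (hβ₁0 : 0 < β₁) (hβ₁β₂ : β₁ < β₂ ^ ((1 : ℝ) / 4))
    (hβ₂0 : 0 < β₂) (hβ₂1 : β₂ < 1)
    (a b c : ℕ → ℝ) (hc : ∀ t, 1 ≤ t → 0 ≤ c t) (ha0 : 0 < a 0) (hb0 : b 0 = 0)
    (ha : ∀ t, 1 ≤ t → a t = β₂ * a (t - 1) + (1 - β₂) * (c t) ^ 2)
    (hb : ∀ t, 1 ≤ t → b t = β₁ * b (t - 1) + (1 - β₁) * c t) :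
    ∀ T : ℕ, 1 ≤ T →
      ∑ t ∈ Finset.Icc 1 T, (b t) ^ 2 / Real.sqrt (a t)
        ≤ ((1 - β₁) ^ 2 / (1 - β₁ / β₂ ^ ((1 : ℝ) / 4)) ^ 2)
            * ∑ t ∈ Finset.Icc 1 T, (c t) ^ 2 / Real.sqrt (a t) := by
  have hq0 : 0 < β₂ ^ ((1 : ℝ) / 4) := Real.rpow_pos_of_pos hβ₂0 _
  have hq4 : (β₂ ^ ((1 : ℝ) / 4)) ^ 4 = β₂ := by
    rw [← Real.rpow_natCast, ← Real.rpow_mul hβ₂0.le]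
    norm_num
  generalize β₂ ^ ((1 : ℝ) / 4) = q at *
  obtain ⟨r, hr⟩ : ∃ r, r = β₁ / q := ⟨_, rfl⟩
  rw [← hr]
  have hr0 : 0 < r := by rw [hr]; positivity
  have hr1 : r < 1 := by rw [hr, div_lt_one hq0]; exact hβ₁β₂
  have hβ : β₁ = r * q := by rw [hr]; field_simp
  have h1r : 0 < 1 - r := by linarith
  have hapos : ∀ t, 0 < a t := by
    intro t
    induction t with
    | zero => exact ha0
    | succ n ih =>
      rw [ha (n + 1) (by omega), Nat.add_sub_cancel]
      have h1 : 0 < β₂ * a n := mul_pos hβ₂0 ih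
      have h2 : 0 ≤ (1 - β₂) * (c (n + 1)) ^ 2 := mul_nonneg (by linarith) (sq_nonneg _)
      linarith
  have hsq : ∀ n, q ^ 2 * Real.sqrt (a n) ≤ Real.sqrt (a (n + 1)) := by
    intro n
    apply Real.le_sqrt_of_sq_le
    rw [mul_pow, Real.sq_sqrt (hapos n).le, ha (n + 1) (by omega), Nat.add_sub_cancel]
    have h2 : 0 ≤ (1 - β₂) * (c (n + 1)) ^ 2 := mul_nonneg (by linarith) (sq_nonneg _)
    have h3 : (q ^ 2) ^ 2 = β₂ := by rw [← hq4]; ring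
    rw [h3]
    linarith
  have hstep : ∀ n, (b (n + 1)) ^ 2 / Real.sqrt (a (n + 1)) ≤
      r * ((b n) ^ 2 / Real.sqrt (a n)) +
        (1 - β₁) ^ 2 / (1 - r) * ((c (n + 1)) ^ 2 / Real.sqrt (a (n + 1))) := by
    intro n
    have hs := Real.sqrt_pos.2 (hapos n)
    have hs' := Real.sqrt_pos.2 (hapos (n + 1))
    obtain ⟨w, hw⟩ : ∃ w, w = (1 - β₁) * c (n + 1) / (1 - r) := ⟨_, rfl⟩
    have hw' : (1 - β₁) * c (n + 1) = (1 - r) * w := by rw [hw]; field_simp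
    have hK : (1 - β₁) ^ 2 / (1 - r) * (c (n + 1)) ^ 2 = (1 - r) * w ^ 2 := by
      rw [hw]; field_simp
    have hbb : (b (n + 1)) ^ 2 ≤ r * (q * b n) ^ 2 + (1 - r) * w ^ 2 := by
      rw [hb (n + 1) (by omega), Nat.add_sub_cancel, hw', hβ]
      have := mul_nonneg (mul_nonneg hr0.le h1r.le) (sq_nonneg (q * b n - w))
      nlinarith [this]
    have h5 : (q * b n) ^ 2 / Real.sqrt (a (n + 1)) ≤ (b n) ^ 2 / Real.sqrt (a n) := by
      rw [div_le_div_iff₀ hs' hs]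
      have := mul_le_mul_of_nonneg_left (hsq n) (sq_nonneg (b n))
      nlinarith [this]
    calc (b (n + 1)) ^ 2 / Real.sqrt (a (n + 1))
        ≤ (r * (q * b n) ^ 2 + (1 - r) * w ^ 2) / Real.sqrt (a (n + 1)) := by gcongr
      _ = r * ((q * b n) ^ 2 / Real.sqrt (a (n + 1))) +
          (1 - β₁) ^ 2 / (1 - r) * ((c (n + 1)) ^ 2 / Real.sqrt (a (n + 1))) := by
          rw [← hK]; ring
      _ ≤ _ := by gcongr
  have key : ∀ T : ℕ, (1 - r) * ∑ t ∈ Finset.Icc 1 T, (b t) ^ 2 / Real.sqrt (a t)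
      + r * ((b T) ^ 2 / Real.sqrt (a T))
      ≤ (1 - β₁) ^ 2 / (1 - r) * ∑ t ∈ Finset.Icc 1 T, (c t) ^ 2 / Real.sqrt (a t) := by
    intro T
    induction T with
    | zero => simp [hb0]
    | succ n ih =>
      rw [Finset.sum_Icc_succ_top (by omega), Finset.sum_Icc_succ_top (by omega), mul_add, mul_add]
      linarith [hstep n]
  intro T _
  have h6 : 0 ≤ r * ((b T) ^ 2 / Real.sqrt (a T)) := by positivity
  have h7 := key T
  have h8 : (1 - β₁) ^ 2 / (1 - r) ^ 2 = (1 - β₁) ^ 2 / (1 - r) / (1 - r) := by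
    rw [div_div, sq (1 - r)]
  rw [h8, div_mul_eq_mul_div, le_div_iff₀ h1r]
  linarith
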